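/- Let ε ∈ (0,1), α ∈ (0,1), Q ∈ (0, ε]. Let f be holomorphic on the open unit disc such that f and f′ extend continuously to the closed unit disc with sup_{|z|≤1}|f′(z)| ≤ (1−ε)/2, and set Φ(w) = w + Q/w + f(w) for w ∈ 𝕋. Then there is a constant C = C(ε, α), independent of f, Q and h, such that for every h holomorphic on the open unit disc whose derivative h′ extends continuously to the closed disc, the function T h(w) = (1/(2πi)) ∮_{|ξ|=1} (conj(Φ(ξ)) − conj(Φ(w)))/(Φ(ξ) − Φ(w)) · h′(ξ) dξ is α-Hölder continuous on 𝕋 with Hölder norm ‖T h‖_{C^α(𝕋)} ≤ C·sup_{ξ∈𝕋}|h′(ξ)|. -/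

import Mathlib

open Metric

/-- The singular integral `I₁(f)h(w) = (1/2πi)∮_{|ξ|=1}
(conj Φ(ξ) - conj Φ(w))/(Φ(ξ) - Φ(w)) · h'(ξ) dξ` with
`Φ(w) = w + Q/w + f(w)`. -/
noncomputable def I1Int (Q : ℝ) (f h' : ℂ → ℂ) (w : ℂ) : ℂ :=
  (∮ ξ in C(0, 1),
      (starRingEnd ℂ (ξ + (Q : ℂ) / ξ + f ξ) - starRingEnd ℂ (w + (Q : ℂ) / w + f w)) /
        ((ξ + (Q : ℂ) / ξ + f ξ) - (w + (Q : ℂ) / w + f w)) * h' ξ) /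
    (2 * Real.pi * Complex.I)

/-- The chord between two points of the unit circle dominates `2 / π` times the arc. -/
lemma two_div_pi_mul_abs_le_norm_circleMap_sub {θ φ : ℝ} (h : |θ - φ| ≤ Real.pi) :
    2 / Real.pi * |θ - φ| ≤ ‖circleMap 0 1 θ - circleMap 0 1 φ‖ := by
  have e : circleMap 0 1 θ - circleMap 0 1 φ =
      circleMap 0 1 φ * (Complex.exp (Complex.I * ((θ - φ : ℝ) : ℂ)) - 1) := by
    simp only [circleMap, zero_add, Complex.ofReal_one, one_mul, mul_sub, mul_one,
      ← Complex.exp_add]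
    congr 2
    push_cast
    ring
  rw [e, norm_mul, Complex.norm_exp_I_mul_ofReal_sub_one, norm_circleMap_zero, abs_one, one_mul,
    norm_mul, Real.norm_two, Real.norm_eq_abs]
  have h2 : |(θ - φ) / 2| = |θ - φ| / 2 := by rw [abs_div, abs_two]
  have := Real.mul_abs_le_abs_sin (x := (θ - φ) / 2) (by rw [h2]; linarith)
  rw [h2] at this
  linarith

lemma intervalIntegrable_mul_abs_rpow_neg {k α : ℝ} (hk : 0 ≤ k) (hα : α < 1) (a b : ℝ) :
    IntervalIntegrable (fun t : ℝ => (k * |t|) ^ (-α)) MeasureTheory.volume a b := by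
  have h0 : ∀ x : ℝ,
      IntervalIntegrable (fun t : ℝ => (k * |t|) ^ (-α)) MeasureTheory.volume 0 x := by
    refine fun x => intervalIntegrable_of_even (fun x => by simp) (fun x hx => ?_) (by simp)
    refine ((intervalIntegral.intervalIntegrable_rpow' (r := -α)
      (by linarith)).const_mul (k ^ (-α))).congr fun t ht => ?_
    rw [Set.uIoc_of_le hx.le] at ht
    simp only [abs_of_pos ht.1]
    rw [Real.mul_rpow hk ht.1.le]
  exact (h0 a).symm.trans (h0 b)

/-- A function on the unit circle with a singularity of order `α < 1` at one point has a circle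
integral controlled independently of that point. -/
lemma norm_circleIntegral_le_of_norm_le_rpow_neg {g : ℂ → ℂ} {A α : ℝ} {w : ℂ}
    (hα : α ∈ Set.Ioo (0 : ℝ) 1) (hA : 0 ≤ A) (hw : w ∈ sphere (0 : ℂ) 1)
    (hg : ∀ ξ ∈ sphere (0 : ℂ) 1, ξ ≠ w → ‖g ξ‖ ≤ A * ‖ξ - w‖ ^ (-α)) :
    ‖∮ ξ in C(0, 1), g ξ‖ ≤
      A * ∫ t in (-Real.pi)..Real.pi, (2 / Real.pi * |t|) ^ (-α) := by
  have hpi := Real.pi_pos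
  obtain ⟨φ, rfl⟩ : ∃ φ, circleMap 0 1 φ = w := by
    have : w ∈ Set.range (circleMap 0 1) := by simpa using hw
    exact this
  have hper : Function.Periodic
      (fun θ => deriv (circleMap 0 1) θ • g (circleMap 0 1 θ)) (2 * Real.pi) := by
    intro θ
    simp only [deriv_circleMap, periodic_circleMap 0 1 θ]
  have hshift := hper.intervalIntegral_add_eq 0 (φ - Real.pi)
  rw [zero_add, show φ - Real.pi + 2 * Real.pi = φ + Real.pi by ring] at hshift
  rw [circleIntegral, hshift]
  have hint : IntervalIntegrable (fun θ : ℝ => A * (2 / Real.pi * |θ - φ|) ^ (-α))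
      MeasureTheory.volume (φ - Real.pi) (φ + Real.pi) := by
    have := ((intervalIntegrable_mul_abs_rpow_neg (k := 2 / Real.pi) (by positivity) hα.2
      (-Real.pi) Real.pi).comp_sub_right φ (by simp)).const_mul A
    rwa [neg_add_eq_sub, add_comm Real.pi] at this
  refine (intervalIntegral.norm_integral_le_of_norm_le (by linarith) ?_ hint).trans_eq ?_
  · filter_upwards [MeasureTheory.Measure.ae_ne MeasureTheory.volume φ] with θ hθ hmem
    have habs : |θ - φ| ≤ Real.pi := abs_le.2 ⟨by linarith [hmem.1], by linarith [hmem.2]⟩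
    have hlow := two_div_pi_mul_abs_le_norm_circleMap_sub habs
    have hpos : 0 < 2 / Real.pi * |θ - φ| :=
      mul_pos (by positivity) (abs_pos.2 (sub_ne_zero.2 hθ))
    have hne : circleMap 0 1 θ ≠ circleMap 0 1 φ := by
      intro h
      rw [h, sub_self, norm_zero] at hlow
      linarith
    rw [norm_smul, deriv_circleMap, norm_mul, Complex.norm_I, norm_circleMap_zero, abs_one,
      one_mul, one_mul]
    refine (hg _ (by simp) hne).trans (mul_le_mul_of_nonneg_left ?_ hA)
    exact Real.rpow_le_rpow_of_nonpos hpos hlow (by linarith [hα.1])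
  · rw [intervalIntegral.integral_const_mul,
      intervalIntegral.integral_comp_sub_right (fun t => (2 / Real.pi * |t|) ^ (-α)) φ]
    congr 2 <;> ring

lemma norm_conj_div_self_le_one (a : ℂ) : ‖starRingEnd ℂ a / a‖ ≤ 1 := by
  rw [norm_div, Complex.norm_conj]
  exact div_self_le_one _

/-- Interpolated Hölder bound for `a ↦ conj a / a`. -/
lemma norm_conj_div_self_sub_le_rpow {a b : ℂ} {α : ℝ} (hb : b ≠ 0)
    (hα : α ∈ Set.Ioo (0 : ℝ) 1) :
    ‖starRingEnd ℂ a / a - starRingEnd ℂ b / b‖ ≤ 2 * (‖a - b‖ / ‖b‖) ^ α := by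
  have hb' : 0 < ‖b‖ := norm_pos_iff.2 hb
  rcases le_total 1 (‖a - b‖ / ‖b‖) with h | h
  · have h1 := Real.one_le_rpow h hα.1.le
    have := norm_sub_le (starRingEnd ℂ a / a) (starRingEnd ℂ b / b)
    linarith [norm_conj_div_self_le_one a, norm_conj_div_self_le_one b]
  · have hlin : ‖starRingEnd ℂ a / a - starRingEnd ℂ b / b‖ ≤ 2 * (‖a - b‖ / ‖b‖) := by
      by_cases ha : a = 0
      · subst ha
        simp [hb]
      have e : starRingEnd ℂ a / a - starRingEnd ℂ b / b =
          (starRingEnd ℂ (a - b) - starRingEnd ℂ a / a * (a - b)) / b := by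
        rw [map_sub]
        field_simp
        ring
      rw [e, norm_div, ← mul_div_assoc]
      gcongr
      refine (norm_sub_le _ _).trans ?_
      rw [Complex.norm_conj, norm_mul]
      nlinarith [norm_conj_div_self_le_one a, norm_nonneg (a - b)]
    refine hlin.trans (mul_le_mul_of_nonneg_left ?_ zero_le_two)
    exact Real.self_le_rpow_of_le_one (by positivity) h hα.2.le

lemma norm_sub_le_of_norm_deriv_le_closedBall {f f' : ℂ → ℂ} {c : ℝ}
    (hf : ContinuousOn f (closedBall (0 : ℂ) 1))
    (hf' : ∀ z ∈ ball (0 : ℂ) 1, HasDerivAt f (f' z) z)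
    (hc : ∀ z ∈ ball (0 : ℂ) 1, ‖f' z‖ ≤ c) {x y : ℂ}
    (hx : x ∈ closedBall (0 : ℂ) 1) (hy : y ∈ closedBall (0 : ℂ) 1) :
    ‖f x - f y‖ ≤ c * ‖x - y‖ := by
  have hc0 : 0 ≤ c := (norm_nonneg _).trans (hc 0 (by simp))
  have hcl : closure (ball (0 : ℂ) 1) = closedBall 0 1 := closure_ball _ one_ne_zero
  have hlip : LipschitzOnWith ⟨c, hc0⟩ f (ball (0 : ℂ) 1) :=
    (convex_ball _ _).lipschitzOnWith_of_nnnorm_hasDerivWithin_le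
      (fun z hz => (hf' z hz).hasDerivWithinAt) (fun z hz => hc z hz)
  have := (LipschitzOnWith.closure (hcl ▸ hf) hlip).dist_le_mul x (hcl ▸ hx) y (hcl ▸ hy)
  rwa [dist_eq_norm, dist_eq_norm] at this

/-- Two-sided bounds for `Φ(w) = w + Q / w + f w` on the unit circle. -/
lemma norm_perturbed_joukowski_sub_bounds {f : ℂ → ℂ} {Q c : ℝ} (hQ : 0 ≤ Q) {x y : ℂ}
    (hx : x ∈ sphere (0 : ℂ) 1) (hy : y ∈ sphere (0 : ℂ) 1)
    (hf : ‖f x - f y‖ ≤ c * ‖x - y‖) :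
    (1 - Q - c) * ‖x - y‖ ≤ ‖(x + (Q : ℂ) / x + f x) - (y + (Q : ℂ) / y + f y)‖ ∧
      ‖(x + (Q : ℂ) / x + f x) - (y + (Q : ℂ) / y + f y)‖ ≤ (1 + Q + c) * ‖x - y‖ := by
  have nx : ‖x‖ = 1 := by simpa using hx
  have ny : ‖y‖ = 1 := by simpa using hy
  have hx0 : x ≠ 0 := norm_ne_zero_iff.1 (by rw [nx]; exact one_ne_zero)
  have hy0 : y ≠ 0 := norm_ne_zero_iff.1 (by rw [ny]; exact one_ne_zero)
  have hq : ‖(Q : ℂ) / x - (Q : ℂ) / y‖ = Q * ‖x - y‖ := by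
    rw [show (Q : ℂ) / x - (Q : ℂ) / y = Q * (y - x) / (x * y) by field_simp]
    rw [norm_div, norm_mul, norm_mul, nx, ny, Complex.norm_real, Real.norm_of_nonneg hQ,
      norm_sub_rev y x]
    ring
  have e : (x + (Q : ℂ) / x + f x) - (y + (Q : ℂ) / y + f y) =
      (x - y) + (((Q : ℂ) / x - (Q : ℂ) / y) + (f x - f y)) := by ring
  have h1 := norm_add_le ((Q : ℂ) / x - (Q : ℂ) / y) (f x - f y)
  rw [e]
  constructor
  · have := norm_sub_le_norm_add (x - y) (((Q : ℂ) / x - (Q : ℂ) / y) + (f x - f y))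
    linarith
  · have := norm_add_le (x - y) (((Q : ℂ) / x - (Q : ℂ) / y) + (f x - f y))
    linarith

/-- The integrand `(conj F - conj c) / (F - c) * k` is circle integrable when `F` and `k` are
continuous on the unit circle. -/
lemma circleIntegrable_conj_div_self_mul {F k : ℂ → ℂ} (hF : ContinuousOn F (sphere (0 : ℂ) 1))
    (hk : ContinuousOn k (sphere (0 : ℂ) 1)) (c : ℂ) :
    CircleIntegrable (fun ξ => (starRingEnd ℂ (F ξ) - starRingEnd ℂ c) / (F ξ - c) * k ξ) 0 1 := by
  have hcomp : ∀ {G : ℂ → ℂ}, ContinuousOn G (sphere (0 : ℂ) 1) →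
      Continuous fun θ => G (circleMap 0 1 θ) := fun hG =>
    hG.comp_continuous (continuous_circleMap 0 1) fun θ => by simp
  have hFc := hcomp hF
  have hkc := hcomp hk
  rw [CircleIntegrable]
  refine (hkc.intervalIntegrable 0 (2 * Real.pi)).norm.mono_fun ?_ ?_
  · have hconj : Continuous fun θ => starRingEnd ℂ (F (circleMap 0 1 θ)) :=
      Complex.continuous_conj.comp hFc
    exact (((hconj.measurable.sub_const _).div (hFc.measurable.sub_const _)).mul
      hkc.measurable).aestronglyMeasurable
  · refine Filter.Eventually.of_forall fun θ => ?_
    simp only [norm_norm]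
    rw [norm_mul, ← map_sub]
    exact mul_le_of_le_one_left (norm_nonneg _) (norm_conj_div_self_le_one _)

/-- Hölder estimate for `I₁`: for `ε, α ∈ (0,1)` there is `C = C(ε,α)` such
that for every `Q ∈ (0,ε]`, every `f` holomorphic on the disc with `f, f'`
continuous up to the boundary and `sup_{|z|≤1}|f'| ≤ (1-ε)/2`, and every `h`
holomorphic on the disc with `h'` continuous up to the boundary, the function
`I₁(f)h` satisfies `‖I₁(f)h‖_{C^α(𝕋)} ≤ C·sup_{ξ∈𝕋}|h'(ξ)|`. -/
theorem I1_holder_estimate (ε α : ℝ) (hε : ε ∈ Set.Ioo (0:ℝ) 1)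
    (hα : α ∈ Set.Ioo (0:ℝ) 1) :
    ∃ C : ℝ, 0 < C ∧
    ∀ (Q : ℝ), Q ∈ Set.Ioc (0:ℝ) ε →
    ∀ (f f' h h' : ℂ → ℂ),
      DifferentiableOn ℂ f (ball (0:ℂ) 1) →
      ContinuousOn f (closedBall (0:ℂ) 1) →
      (∀ z ∈ ball (0:ℂ) 1, HasDerivAt f (f' z) z) →
      ContinuousOn f' (closedBall (0:ℂ) 1) →
      (∀ z ∈ closedBall (0:ℂ) 1, ‖f' z‖ ≤ (1 - ε) / 2) →
      DifferentiableOn ℂ h (ball (0:ℂ) 1) →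
      (∀ z ∈ ball (0:ℂ) 1, HasDerivAt h (h' z) z) →
      ContinuousOn h' (closedBall (0:ℂ) 1) →
      ∀ M : ℝ, (∀ ξ ∈ sphere (0:ℂ) 1, ‖h' ξ‖ ≤ M) →
      (∀ w ∈ sphere (0:ℂ) 1, ‖I1Int Q f h' w‖ ≤ C * M) ∧
      (∀ w₁ ∈ sphere (0:ℂ) 1, ∀ w₂ ∈ sphere (0:ℂ) 1,
        ‖I1Int Q f h' w₁ - I1Int Q f h' w₂‖
          ≤ C * M * ‖w₁ - w₂‖ ^ α) := by
  obtain ⟨hε0, hε1⟩ := hε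
  have hpi := Real.pi_pos
  set B : ℝ := ∫ t in (-Real.pi)..Real.pi, (2 / Real.pi * |t|) ^ (-α) with hB
  have hB0 : 0 ≤ B :=
    intervalIntegral.integral_nonneg (by linarith) fun t _ => Real.rpow_nonneg (by positivity) _
  set κ : ℝ := 3 / ((1 - ε) / 2) with hκ
  have hc0 : 0 < (1 - ε) / 2 := by linarith
  have hκ0 : 0 < κ := by positivity
  refine ⟨1 + 2 * κ ^ α * B, by positivity, ?_⟩
  intro Q hQ f f' h h' _ hfc hfd _ hfb _ _ hh'c M hM
  have hM0 : 0 ≤ M := (norm_nonneg _).trans (hM 1 (by simp))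
  have hCM : M ≤ (1 + 2 * κ ^ α * B) * M :=
    le_mul_of_one_le_left hM0 (le_add_of_nonneg_right (by positivity))
  have h2pi : ‖(2 * Real.pi * Complex.I : ℂ)‖ = 2 * Real.pi := by
    simp [abs_of_pos hpi]
  refine ⟨fun w _ => ?_, fun w₁ hw₁ w₂ hw₂ => ?_⟩
  · refine le_trans ?_ hCM
    rw [I1Int, norm_div, h2pi, div_le_iff₀ (by positivity)]
    refine (circleIntegral.norm_integral_le_of_norm_le_const zero_le_one fun ξ hξ => ?_).trans_eq
      (b := 2 * Real.pi * 1 * M) (by ring)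
    rw [norm_mul, ← map_sub]
    exact (mul_le_of_le_one_left (norm_nonneg _) (norm_conj_div_self_le_one _)).trans (hM ξ hξ)
  · have hbd : ∀ x ∈ sphere (0 : ℂ) 1, ∀ y ∈ sphere (0 : ℂ) 1,
        (1 - ε) / 2 * ‖x - y‖ ≤ ‖(x + (Q : ℂ) / x + f x) - (y + (Q : ℂ) / y + f y)‖ ∧
        ‖(x + (Q : ℂ) / x + f x) - (y + (Q : ℂ) / y + f y)‖ ≤ 3 * ‖x - y‖ := by
      intro x hx y hy
      obtain ⟨hl, hu⟩ := norm_perturbed_joukowski_sub_bounds hQ.1.le hx hy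
        (norm_sub_le_of_norm_deriv_le_closedBall hfc hfd
          (fun z hz => hfb z (ball_subset_closedBall hz))
          (sphere_subset_closedBall hx) (sphere_subset_closedBall hy))
      have hQε := hQ.2
      exact ⟨(mul_le_mul_of_nonneg_right (by linarith) (norm_nonneg _)).trans hl,
        hu.trans (mul_le_mul_of_nonneg_right (by linarith) (norm_nonneg _))⟩
    have hΦ : ContinuousOn (fun ξ : ℂ => ξ + (Q : ℂ) / ξ + f ξ) (sphere (0 : ℂ) 1) := by
      refine (continuousOn_id.add (continuousOn_const.div continuousOn_id fun ξ hξ => ?_)).add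
        (hfc.mono sphere_subset_closedBall)
      exact ne_of_mem_sphere hξ one_ne_zero
    have hint := circleIntegrable_conj_div_self_mul hΦ (hh'c.mono sphere_subset_closedBall)
    rw [I1Int, I1Int, ← sub_div, ← circleIntegral.integral_sub (hint _) (hint _), norm_div, h2pi]
    have hkey := norm_circleIntegral_le_of_norm_le_rpow_neg (w := w₂)
      (g := fun ξ => (starRingEnd ℂ (ξ + (Q : ℂ) / ξ + f ξ) -
        starRingEnd ℂ (w₁ + (Q : ℂ) / w₁ + f w₁)) /
        ((ξ + (Q : ℂ) / ξ + f ξ) - (w₁ + (Q : ℂ) / w₁ + f w₁)) * h' ξ -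
        (starRingEnd ℂ (ξ + (Q : ℂ) / ξ + f ξ) - starRingEnd ℂ (w₂ + (Q : ℂ) / w₂ + f w₂)) /
        ((ξ + (Q : ℂ) / ξ + f ξ) - (w₂ + (Q : ℂ) / w₂ + f w₂)) * h' ξ)
      (A := 2 * κ ^ α * ‖w₁ - w₂‖ ^ α * M) hα (by positivity) hw₂ ?_
    · rw [← hB] at hkey
      have hX : 0 ≤ M * ‖w₁ - w₂‖ ^ α := by positivity
      rw [div_le_iff₀ (by positivity)]
      refine hkey.trans ?_
      have h1 : 1 ≤ 2 * Real.pi := by linarith [Real.pi_gt_three]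
      calc 2 * κ ^ α * ‖w₁ - w₂‖ ^ α * M * B
          = (2 * κ ^ α * B) * (M * ‖w₁ - w₂‖ ^ α) := by ring
        _ ≤ (1 + 2 * κ ^ α * B) * (M * ‖w₁ - w₂‖ ^ α) :=
            mul_le_mul_of_nonneg_right (by linarith) hX
        _ ≤ (1 + 2 * κ ^ α * B) * (M * ‖w₁ - w₂‖ ^ α) * (2 * Real.pi) :=
            le_mul_of_one_le_right (by positivity) h1
        _ = _ := by ring
    · intro ξ hξ hne
      have hd : 0 < ‖ξ - w₂‖ := norm_pos_iff.2 (sub_ne_zero.2 hne)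
      have hlow := (hbd ξ hξ w₂ hw₂).1
      have hup := (hbd w₂ hw₂ w₁ hw₁).2
      have hlow0 : 0 < (1 - ε) / 2 * ‖ξ - w₂‖ := mul_pos hc0 hd
      rw [← sub_mul, norm_mul, ← map_sub, ← map_sub]
      refine mul_le_mul ?_ (hM ξ hξ) (norm_nonneg _) (by positivity) |>.trans_eq
        (b := 2 * κ ^ α * ‖w₁ - w₂‖ ^ α * ‖ξ - w₂‖ ^ (-α) * M) (by ring)
      refine (norm_conj_div_self_sub_le_rpow (norm_pos_iff.1 (hlow0.trans_le hlow)) hα).trans ?_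
      rw [sub_sub_sub_cancel_left]
      rw [Real.rpow_neg hd.le, ← div_eq_mul_inv, mul_assoc 2, ← Real.mul_rpow hκ0.le (norm_nonneg _),
        mul_div_assoc, ← Real.div_rpow (by positivity) hd.le]
      refine mul_le_mul_of_nonneg_left (Real.rpow_le_rpow (by positivity) ?_ hα.1.le) zero_le_two
      calc _ ≤ 3 * ‖w₂ - w₁‖ / ((1 - ε) / 2 * ‖ξ - w₂‖) := by gcongr
        _ = κ * ‖w₁ - w₂‖ / ‖ξ - w₂‖ := by
            rw [hκ, norm_sub_rev w₂ w₁]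
            field_simp
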